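/- The number of simultaneous conjugacy classes of pairs of commuting elements of SL_2(F_q), for q odd, equals q^2 + 8q + 9; more generally c_s(2,1,q) = q+4 and c_s(2,2,q) = q^2 + 8q + 9. -/

import Mathlib

/-- The number of orbits of a group `G` acting by simultaneous conjugation on the set
of `m`-tuples of pairwise commuting elements of `G`. -/
noncomputable def commClassCount (G : Type*) [Group G] (m : ℕ) : ℕ :=
  Nat.card (Quot (fun v w : {v : Fin m → G // ∀ i j, Commute (v i) (v j)} =>
    ∃ g : G, ∀ i, g * v.1 i * g⁻¹ = w.1 i))

/-!
By the orbit-counting lemma the number of commuting `(m + 1)`-tuples is `c m * |G|`, where `c m` is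
the number of classes of commuting `m`-tuples. When noncentral elements have abelian centralizers,
sorting these tuples by their first entry gives a recursion for `c` whose only input is the orders
of the centralizers. In `SL₂(F)` the centralizer of a noncentral `g` of trace `t` consists of the
`x + y g` with `x ^ 2 + t x y + y ^ 2 = 1`, so that its order, like the number of elements of
trace `t`, is governed by the quadratic character of the discriminant `t ^ 2 - 4`.
-/

section CommTuples

open Subgroup

/-- The `m`-tuples of pairwise commuting elements of `G`, as a subset of `Fin m → G` stable under
simultaneous conjugation. -/
def commTuples (G : Type*) [Group G] (m : ℕ) : SubMulAction (ConjAct G) (Fin m → G) where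
  carrier := {v | ∀ i j, Commute (v i) (v j)}
  smul_mem' g _ hv i j := (Commute.conj_iff (ConjAct.ofConjAct g)).2 (hv i j)

variable {G : Type*} [Group G] {m : ℕ}

theorem mem_commTuples {v : Fin m → G} : v ∈ commTuples G m ↔ ∀ i j, Commute (v i) (v j) :=
  Iff.rfl

theorem cons_mem_commTuples {g : G} {v : Fin m → G} :
    (Fin.cons g v : Fin (m + 1) → G) ∈ commTuples G (m + 1) ↔
      v ∈ commTuples G m ∧ ∀ i, v i ∈ centralizer {g} := by
  simp only [mem_commTuples, Fin.forall_fin_succ, Fin.cons_zero, Fin.cons_succ,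
    mem_centralizer_singleton_iff]
  grind [Commute, SemiconjBy]

theorem mem_fixedBy_commTuples {g : ConjAct G} {v : commTuples G m} :
    v ∈ MulAction.fixedBy (commTuples G m) g ↔
      ∀ i, v.1 i ∈ centralizer {ConjAct.ofConjAct g} := by
  simp only [MulAction.mem_fixedBy, Subtype.ext_iff, funext_iff, mem_centralizer_singleton_iff,
    SubMulAction.val_smul, Pi.smul_apply, ConjAct.smul_def, mul_inv_eq_iff_eq_mul]
  exact forall_congr' fun _ => eq_comm

theorem commClassCount_eq_card_orbits (G : Type*) [Group G] (m : ℕ) :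
    commClassCount G m =
      Nat.card (MulAction.orbitRel.Quotient (ConjAct G) (commTuples G m)) := by
  refine Nat.card_congr (Quot.congrRight fun v w => ?_)
  refine Iff.trans ?_ (MulAction.orbitRel _ _).comm'
  exact exists_congr fun _ =>
    ⟨fun h => Subtype.ext (funext h), fun h => congrFun (congrArg Subtype.val h)⟩

/-- Splitting off the first entry of a commuting tuple. -/
def commTuplesSuccEquiv (G : Type*) [Group G] (m : ℕ) :
    commTuples G (m + 1) ≃ Σ g : G, {v // v ∈ commTuples G m ∧ ∀ i, v i ∈ centralizer {g}} where
  toFun v := ⟨v.1 0, Fin.tail v.1, cons_mem_commTuples.1 (by simp [Fin.cons_self_tail])⟩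
  invFun p := ⟨Fin.cons p.1 p.2.1, cons_mem_commTuples.2 p.2.2⟩
  left_inv v := Subtype.ext (Fin.cons_self_tail v.1)
  right_inv _ := rfl

theorem card_commTuples_succ (G : Type*) [Group G] (m : ℕ) :
    Nat.card (commTuples G (m + 1)) = commClassCount G m * Nat.card G := by
  have fixedByEquiv (g : ConjAct G) : MulAction.fixedBy (commTuples G m) g ≃
      {v // v ∈ commTuples G m ∧ ∀ i, v i ∈ centralizer {ConjAct.ofConjAct g}} :=
    (Equiv.subtypeEquivRight fun _ => mem_fixedBy_commTuples).trans
      (Equiv.subtypeSubtypeEquivSubtypeInter (· ∈ commTuples G m)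
        fun v => ∀ i, v i ∈ centralizer {ConjAct.ofConjAct g})
  rw [commClassCount_eq_card_orbits, Nat.card_congr (commTuplesSuccEquiv G m),
    Nat.card_congr (Equiv.sigmaCongr ConjAct.ofConjAct.toEquiv fixedByEquiv).symm,
    Nat.card_congr (MulAction.sigmaFixedByEquivOrbitsProdGroup _ _), Nat.card_prod]
  rfl

theorem card_commTuples_centralizing_of_mem_center {g : G} (hg : g ∈ center G) :
    Nat.card {v // v ∈ commTuples G m ∧ ∀ i, v i ∈ centralizer {g}} =
      Nat.card (commTuples G m) := by
  have h_top : centralizer {g} = ⊤ := centralizer_eq_top_iff_subset.2 (by simpa using hg)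
  simp only [h_top, mem_top, implies_true, and_true]

theorem card_commTuples_centralizing_of_isMulCommutative {g : G}
    (hg : IsMulCommutative (centralizer {g})) :
    Nat.card {v // v ∈ commTuples G m ∧ ∀ i, v i ∈ centralizer {g}} =
      Nat.card (centralizer {g}) ^ m := by
  have h_commTuples (v : Fin m → G) (hv : ∀ i, v i ∈ centralizer {g}) : v ∈ commTuples G m :=
    fun i j => congrArg Subtype.val (hg.is_comm.comm ⟨v i, hv i⟩ ⟨v j, hv j⟩)
  rw [Nat.card_congr ((Equiv.subtypeEquivRight fun v => and_iff_right_of_imp (h_commTuples v)).trans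
    (Equiv.subtypePiEquivPi (p := fun _ x => x ∈ centralizer {g}))), Nat.card_fun, Nat.card_fin]

theorem commClassCount_zero (G : Type*) [Group G] : commClassCount G 0 = 1 := by
  have : Unique {v : Fin 0 → G // ∀ i j, Commute (v i) (v j)} :=
    ⟨⟨⟨finZeroElim, finZeroElim⟩⟩, fun _ => Subsingleton.elim _ _⟩
  exact Nat.card_unique

theorem commClassCount_succ_mul_card [Fintype G] [DecidablePred (· ∈ center G)]
    (h : ∀ g ∉ center G, IsMulCommutative (centralizer {g})) (m : ℕ) :
    commClassCount G (m + 1) * Nat.card G =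
      Nat.card (center G) * (commClassCount G m * Nat.card G) +
        ∑ g : G with g ∉ center G, Nat.card (centralizer {g}) ^ (m + 1) := by
  rw [← card_commTuples_succ, ← card_commTuples_succ, Nat.card_congr (commTuplesSuccEquiv G _),
    Nat.card_sigma, ← Finset.sum_filter_add_sum_filter_not _ (· ∈ center G)]
  congr 1
  · rw [Finset.sum_congr rfl fun g hg => card_commTuples_centralizing_of_mem_center
      (Finset.mem_filter_univ g |>.1 hg), Finset.sum_const, ← Fintype.card_subtype, smul_eq_mul,
      ← Nat.card_eq_fintype_card]
  · exact Finset.sum_congr rfl fun g hg => card_commTuples_centralizing_of_isMulCommutative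
      (h g (Finset.mem_filter_univ g |>.1 hg))

end CommTuples

section QuadraticCounts

variable {F : Type*} [Field F] [Fintype F] [DecidableEq F]

theorem card_sq_eq (hF : ringChar F ≠ 2) (a : F) :
    (Nat.card {x : F // x ^ 2 = a} : ℤ) = quadraticChar F a + 1 := by
  rw [← quadraticChar_card_sqrts hF a, Set.toFinset_card, Nat.card_eq_fintype_card]
  rfl

theorem card_monic_quadratic_roots (hF : ringChar F ≠ 2) (t d : F) :
    (Nat.card {x : F // x ^ 2 - t * x + d = 0} : ℤ) = quadraticChar F (t ^ 2 - 4 * d) + 1 := by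
  have h2 : (2 : F) ≠ 0 := Ring.two_ne_zero hF
  have complete_square (x : F) :
      x ^ 2 - t * x + d = 0 ↔ (2 * x - t) ^ 2 = t ^ 2 - 4 * d := by
    have h4 : (2 * 2 : F) ≠ 0 := mul_ne_zero h2 h2
    rw [← mul_right_inj' h4]
    constructor <;> intro h <;> linear_combination h
  rw [← card_sq_eq hF]
  exact congrArg _ (Nat.card_congr
    (((Equiv.mulLeft₀ 2 h2).trans (Equiv.subRight t)).subtypeEquiv complete_square))

theorem sum_comp_sq {M : Type*} [AddCommGroup M] (hF : ringChar F ≠ 2) (f : F → M) :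
    ∑ x : F, f (x ^ 2) = ∑ y : F, (quadraticChar F y + 1) • f y := by
  rw [← Finset.sum_fiberwise' Finset.univ (fun x : F => x ^ 2) f]
  refine Finset.sum_congr rfl fun y _ => ?_
  rw [Finset.sum_const, ← Fintype.card_subtype, ← Nat.card_eq_fintype_card, ← natCast_zsmul,
    card_sq_eq hF]

theorem sum_quadraticChar_affine (hF : ringChar F ≠ 2) {a : F} (ha : a ≠ 0) (c : F) :
    ∑ x : F, quadraticChar F (a * x + c) = 0 := by
  rw [← quadraticChar_sum_zero hF]
  exact ((Equiv.mulLeft₀ a ha).trans (Equiv.addRight c)).sum_comp fun x => quadraticChar F x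

theorem jacobiSum_quadraticChar (hF : ringChar F ≠ 2) :
    jacobiSum (quadraticChar F) (quadraticChar F) = -quadraticChar F (-1) := by
  simpa only [(quadraticChar_isQuadratic F).inv] using
    jacobiSum_nontrivial_inv (quadraticChar_ne_one hF)

theorem sum_quadraticChar_mul_sq_add (hF : ringChar F ≠ 2) {a c : F} (ha : a ≠ 0) (hc : c ≠ 0) :
    ∑ x : F, quadraticChar F (a * x ^ 2 + c) = -quadraticChar F a := by
  have h_subst (y : F) : quadraticChar F (-(c / a) * y) * quadraticChar F (a * (-(c / a) * y) + c) =
      quadraticChar F (-a) * (quadraticChar F y * quadraticChar F (1 - y)) := by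
    have : -(c / a) * y * (a * (-(c / a) * y) + c) = (c / a) ^ 2 * (-a * (y * (1 - y))) := by
      field_simp
      ring
    rw [← map_mul, this, map_mul, quadraticChar_sq_one' (div_ne_zero hc ha), one_mul, map_mul,
      map_mul]
  calc ∑ x : F, quadraticChar F (a * x ^ 2 + c)
      = ∑ y : F, quadraticChar F y * quadraticChar F (a * y + c) := by
        simp only [sum_comp_sq hF fun y => quadraticChar F (a * y + c), smul_eq_mul, add_mul,
          one_mul, Finset.sum_add_distrib, sum_quadraticChar_affine hF ha, add_zero]
    _ = quadraticChar F (-a) * jacobiSum (quadraticChar F) (quadraticChar F) := by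
        rw [← Equiv.sum_comp (Equiv.mulLeft₀ (-(c / a)) (neg_ne_zero.2 (div_ne_zero hc ha))),
          jacobiSum, Finset.mul_sum]
        exact Finset.sum_congr rfl fun y _ => h_subst y
    _ = -quadraticChar F a := by
        rw [jacobiSum_quadraticChar hF, mul_neg, ← map_mul, neg_mul_neg, mul_one]

theorem sum_quadraticChar_sq_sub (hF : ringChar F ≠ 2) {d : F} (hd : d ≠ 0) :
    ∑ t : F, quadraticChar F (t ^ 2 - d) = -1 := by
  simpa [sub_eq_add_neg] using
    sum_quadraticChar_mul_sq_add hF one_ne_zero (neg_ne_zero.2 hd)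

theorem two_mul_sum_comp_quadraticChar_sq_sub (hF : ringChar F ≠ 2) {d : F} (hd : d ≠ 0)
    (f : ℤ → ℤ) :
    2 * ∑ t : F, f (quadraticChar F (t ^ 2 - d)) =
      2 * (quadraticChar F d + 1) * f 0 + (Fintype.card F - quadraticChar F d - 2) * f 1 +
        (Fintype.card F - quadraticChar F d) * f (-1) := by
  have h_interpolate (x : F) : 2 * f (quadraticChar F x) =
      2 * f 0 + (f 1 - f (-1)) * quadraticChar F x +
        (f 1 + f (-1) - 2 * f 0) * quadraticChar F x ^ 2 := by
    by_cases hx : x = 0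
    · simp [hx]
    · rcases quadraticChar_dichotomy hx with h | h <;> rw [h] <;> ring
  have h_sum_sq : ∑ t : F, quadraticChar F (t ^ 2 - d) ^ 2 =
      Fintype.card F - (quadraticChar F d + 1) := by
    have h_sq (x : F) : quadraticChar F x ^ 2 = 1 - if x = 0 then 1 else 0 := by
      split_ifs with hx
      · rw [hx, quadraticChar_zero, zero_pow two_ne_zero, sub_self]
      · rw [quadraticChar_sq_one hx, sub_zero]
    rw [← card_sq_eq hF, Nat.card_eq_fintype_card, Fintype.card_subtype]
    simp only [h_sq, sub_eq_zero, Finset.sum_sub_distrib, Finset.sum_boole, Finset.sum_const,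
      Finset.card_univ, nsmul_eq_mul, mul_one]
  rw [Finset.mul_sum]
  simp only [h_interpolate, Finset.sum_add_distrib, ← Finset.mul_sum, h_sum_sq,
    sum_quadraticChar_sq_sub hF hd, Finset.sum_const, Finset.card_univ, nsmul_eq_mul]
  ring

theorem card_binary_quadratic_form_eq (hF : ringChar F ≠ 2) (t d : F) {c : F} (hc : c ≠ 0) :
    (Nat.card {p : F × F // p.1 ^ 2 + t * p.1 * p.2 + d * p.2 ^ 2 = c} : ℤ) =
      if t ^ 2 - 4 * d = 0 then Fintype.card F * (quadraticChar F c + 1)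
      else Fintype.card F - quadraticChar F (t ^ 2 - 4 * d) := by
  have h2 : (2 : F) ≠ 0 := Ring.two_ne_zero hF
  have h4 : (4 : F) = 2 ^ 2 := by norm_num
  have sigmaEquiv : {p : F × F // p.1 ^ 2 + t * p.1 * p.2 + d * p.2 ^ 2 = c} ≃
      Σ y : F, {x : F // x ^ 2 - (-t * y) * x + (d * y ^ 2 - c) = 0} :=
    { toFun p := ⟨p.1.2, p.1.1, by linear_combination p.2⟩
      invFun p := ⟨(p.2.1, p.1), by linear_combination p.2.2⟩
      left_inv _ := rfl
      right_inv _ := rfl }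
  have h_discrim (y : F) :
      (-t * y) ^ 2 - 4 * (d * y ^ 2 - c) = (t ^ 2 - 4 * d) * y ^ 2 + 4 * c := by ring
  rw [Nat.card_congr sigmaEquiv, Nat.card_sigma]
  simp only [Nat.cast_sum, card_monic_quadratic_roots hF, h_discrim, Finset.sum_add_distrib,
    Finset.sum_const, Finset.card_univ, nsmul_eq_mul, mul_one]
  split_ifs with hδ
  · have hχ : quadraticChar F (4 * c) = quadraticChar F c := by
      rw [map_mul, h4, quadraticChar_sq_one' h2, one_mul]
    simp only [hδ, zero_mul, zero_add, hχ, Finset.sum_const, Finset.card_univ, nsmul_eq_mul,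
      mul_add, mul_one]
  · rw [sum_quadraticChar_mul_sq_add hF hδ (mul_ne_zero (h4 ▸ pow_ne_zero 2 h2) hc)]
    ring

theorem card_matrix_trace_det (hF : ringChar F ≠ 2) (t d : F) :
    (Nat.card {A : Matrix (Fin 2) (Fin 2) F // A.trace = t ∧ A.det = d} : ℤ) =
      Fintype.card F * (Fintype.card F + quadraticChar F (t ^ 2 - 4 * d)) := by
  have h2 : (2 : F) ≠ 0 := Ring.two_ne_zero hF
  have h4 : (-4 : F) ≠ 0 := by
    rw [show (-4 : F) = -(2 * 2) by norm_num]
    exact neg_ne_zero.2 (mul_ne_zero h2 h2)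
  have sigmaEquiv : {A : Matrix (Fin 2) (Fin 2) F // A.trace = t ∧ A.det = d} ≃
      Σ p : F × F, {x : F // x ^ 2 - t * x + (d + p.1 * p.2) = 0} :=
    { toFun A := ⟨(A.1 0 1, A.1 1 0), A.1 0 0, by
        have htrace := A.2.1
        have hdet := A.2.2
        rw [Matrix.trace_fin_two] at htrace
        rw [Matrix.det_fin_two] at hdet
        linear_combination A.1 0 0 * htrace - hdet⟩
      invFun p := ⟨!![p.2.1, p.1.1; p.1.2, t - p.2.1], by
        rw [Matrix.trace_fin_two_of]
        ring, by
        rw [Matrix.det_fin_two_of]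
        linear_combination -p.2.2⟩
      left_inv A := by
        have htrace := A.2.1
        rw [Matrix.trace_fin_two] at htrace
        refine Subtype.ext ((Matrix.eta_fin_two A.1).trans ?_).symm
        simp only [← htrace, add_sub_cancel_left]
      right_inv _ := rfl }
  have h_inner (b : F) : ∑ c : F, quadraticChar F (t ^ 2 - 4 * (d + b * c)) =
      if b = 0 then Fintype.card F * quadraticChar F (t ^ 2 - 4 * d) else 0 := by
    split_ifs with hb
    · simp [hb]
    · rw [← sum_quadraticChar_affine hF (mul_ne_zero h4 hb) (t ^ 2 - 4 * d)]
      exact Finset.sum_congr rfl fun c _ => by ring_nf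
  rw [Nat.card_congr sigmaEquiv, Nat.card_sigma, Fintype.sum_prod_type]
  simp only [Nat.cast_sum, card_monic_quadratic_roots hF, Finset.sum_add_distrib, h_inner,
    Finset.sum_ite_eq', Finset.mem_univ, if_true, Finset.sum_const, Finset.card_univ, nsmul_eq_mul,
    mul_one]
  ring

end QuadraticCounts

section SpecialLinear

open Module Subgroup Matrix
open scoped MatrixGroups

theorem exists_eq_smul_one_add_smul_of_commute {K V : Type*} [Field K] [AddCommGroup V]
    [Module K V] (hV : finrank K V = 2) {f g : End K V} (hf : ∀ a : K, f ≠ a • 1)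
    (hfg : Commute f g) : ∃ x y : K, g = x • 1 + y • f := by
  obtain ⟨v, hv⟩ : ∃ v, LinearIndependent K ![v, f v] := by
    by_contra! h
    obtain ⟨a, ha⟩ := LinearMap.exists_eq_smul_id_of_forall_notLinearIndependent h
    exact hf a ha
  let b := basisOfLinearIndependentOfCardEqFinrank hv (by rw [Fintype.card_fin, hV])
  have hb : ⇑b = ![v, f v] := coe_basisOfLinearIndependentOfCardEqFinrank hv _
  set x := b.repr (g v) 0
  set y := b.repr (g v) 1
  have hgv : g v = x • v + y • f v := by
    have := b.sum_repr (g v)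
    rw [Fin.sum_univ_two, hb] at this
    exact this.symm
  have hgfv : g (f v) = f (g v) := (LinearMap.congr_fun hfg.eq v).symm
  refine ⟨x, y, b.ext fun i => ?_⟩
  fin_cases i
  · simp [hb, hgv]
  · simp [hb, hgfv, hgv]

theorem exists_matrix_eq_smul_one_add_smul_of_commute {K : Type*} [Field K]
    {A B : Matrix (Fin 2) (Fin 2) K} (hA : ∀ a : K, A ≠ a • 1) (hAB : Commute A B) :
    ∃ x y : K, B = x • 1 + y • A := by
  let e := toLinAlgEquiv' (R := K) (n := Fin 2)
  obtain ⟨x, y, h⟩ := exists_eq_smul_one_add_smul_of_commute (finrank_fin_fun K)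
    (f := e A) (fun a h => hA a (e.injective (by simpa using h))) (hAB.map e)
  exact ⟨x, y, e.injective (by simpa using h)⟩

theorem det_smul_one_add_smul {R : Type*} [CommRing R] (A : Matrix (Fin 2) (Fin 2) R) (x y : R) :
    (x • (1 : Matrix (Fin 2) (Fin 2) R) + y • A).det =
      x ^ 2 + A.trace * x * y + A.det * y ^ 2 := by
  simp only [det_fin_two, trace_fin_two, Matrix.add_apply, Matrix.smul_apply, smul_eq_mul,
    one_apply_eq, one_apply_ne zero_ne_one, one_apply_ne one_ne_zero]
  ring

theorem coe_ne_smul_one_of_notMem_center {n R : Type*} [Fintype n] [DecidableEq n] [CommRing R]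
    {g : Matrix.SpecialLinearGroup n R} (hg : g ∉ center (Matrix.SpecialLinearGroup n R)) (a : R) :
    (g : Matrix n n R) ≠ a • 1 := by
  intro h
  refine hg (Matrix.SpecialLinearGroup.mem_center_iff.2 ⟨a, ?_, ?_⟩)
  · simpa [h] using g.det_coe
  · rw [h, smul_one_eq_diagonal, scalar_apply]

theorem mem_centralizer_singleton_iff_commute_coe {n R : Type*} [Fintype n] [DecidableEq n]
    [CommRing R] {g h : Matrix.SpecialLinearGroup n R} :
    h ∈ centralizer {g} ↔ Commute (g : Matrix n n R) (h : Matrix n n R) :=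
  mem_centralizer_singleton_iff.trans (eq_comm.trans Subtype.ext_iff)

variable {F : Type*} [Field F]

theorem isMulCommutative_centralizer_of_notMem_center {g : SL(2, F)}
    (hg : g ∉ center SL(2, F)) : IsMulCommutative (centralizer {g}) := by
  refine ⟨⟨fun h k => Subtype.ext (Subtype.ext ?_)⟩⟩
  obtain ⟨x, y, hxy⟩ := exists_matrix_eq_smul_one_add_smul_of_commute
    (coe_ne_smul_one_of_notMem_center hg) (mem_centralizer_singleton_iff_commute_coe.1 h.2)
  have h_comm : Commute h.1.1 k.1.1 := by
    rw [hxy]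
    exact ((Commute.one_left _).smul_left x).add_left
      ((mem_centralizer_singleton_iff_commute_coe.1 k.2).smul_left y)
  exact h_comm

/-- The centralizer of a noncentral `g` in `SL₂` as the conic of norm one elements `x + y g` of the
algebra generated by `g`. -/
noncomputable def conicEquivCentralizer {g : SL(2, F)}
    (hg : g ∉ center SL(2, F)) :
    {p : F × F // p.1 ^ 2 + g.1.trace * p.1 * p.2 + p.2 ^ 2 = 1} ≃ centralizer {g} := by
  refine Equiv.ofBijective (fun p => ⟨⟨p.1.1 • 1 + p.1.2 • g.1, ?_⟩, ?_⟩)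
    ⟨fun p p' h => ?_, fun h => ?_⟩
  · rw [det_smul_one_add_smul, g.2, one_mul, p.2]
  · exact mem_centralizer_singleton_iff_commute_coe.2
      (((Commute.one_right _).smul_right _).add_right ((Commute.refl _).smul_right _))
  · have h_indep : LinearIndependent F ![1, g.1] := (LinearIndependent.pair_iff' one_ne_zero).2
      fun a ha => coe_ne_smul_one_of_notMem_center hg a ha.symm
    have h_coe : p.1.1 • 1 + p.1.2 • g.1 = p'.1.1 • 1 + p'.1.2 • g.1 :=
      congrArg (fun h : centralizer {g} => h.1.1) h
    exact Subtype.ext (Prod.ext_iff.2 (h_indep.eq_of_pair h_coe))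
  · obtain ⟨x, y, hxy⟩ := exists_matrix_eq_smul_one_add_smul_of_commute
      (coe_ne_smul_one_of_notMem_center hg) (mem_centralizer_singleton_iff_commute_coe.1 h.2)
    refine ⟨⟨(x, y), ?_⟩, Subtype.ext (Subtype.ext hxy.symm)⟩
    have h_det := h.1.det_coe
    rwa [hxy, det_smul_one_add_smul, g.det_coe, one_mul] at h_det

theorem card_center_specialLinearGroup_two (hF : ringChar F ≠ 2) :
    Nat.card (center SL(2, F)) = 2 := by
  have h_neg_one : IsPrimitiveRoot (-1 : F) 2 := .neg_one (ringChar F) hF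
  rw [Nat.card_congr (Matrix.SpecialLinearGroup.center_equiv_rootsOfUnity' (0 : Fin 2)).toEquiv,
    Fintype.card_fin, h_neg_one.card_rootsOfUnity]

theorem card_mem_center_trace_eq [DecidableEq F] (hF : ringChar F ≠ 2) (t : F) :
    Nat.card {g : SL(2, F) // g ∈ center SL(2, F) ∧ g.1.trace = t} =
      if t ^ 2 - 4 = 0 then 1 else 0 := by
  have h2 : (2 : F) ≠ 0 := Ring.two_ne_zero hF
  have : NeZero (2 : F) := ⟨h2⟩
  have h_unique (g : SL(2, F)) (hg : g ∈ center SL(2, F) ∧ g.1.trace = t) :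
      g.1 = scalar (Fin 2) (t / 2) := by
    rw [← hg.2, ← SpecialLinearGroup.scalar_eq_self_of_mem_center hg.1 0]
    simp [h2]
  have h_det : (scalar (Fin 2) (t / 2)).det = 1 ↔ t ^ 2 - 4 = 0 := by
    simp only [scalar_apply, det_diagonal, Fin.prod_univ_two]
    field_simp
    grind
  split_ifs with ht
  · rw [Nat.card_eq_one_iff_unique]
    refine ⟨⟨fun g h => Subtype.ext (Subtype.ext ?_)⟩,
      ⟨⟨⟨scalar (Fin 2) (t / 2), h_det.2 ht⟩, mem_center_iff.2 fun h => Subtype.ext ?_, ?_⟩⟩⟩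
    · exact (h_unique g g.2).trans (h_unique h h.2).symm
    · exact (scalar_commute (t / 2) (Commute.all _) h.1).eq.symm
    · simp only [trace_fin_two, scalar_apply, diagonal_apply_eq, add_halves]
  · refine Nat.card_eq_zero.2 (.inl ⟨fun g => ht (h_det.1 ?_)⟩)
    rw [← h_unique g g.2, g.1.det_coe]

variable [Fintype F] [DecidableEq F]

theorem card_specialLinearGroup_trace_eq (hF : ringChar F ≠ 2) (t : F) :
    (Nat.card {g : SL(2, F) // g.1.trace = t} : ℤ) =
      Fintype.card F * (Fintype.card F + quadraticChar F (t ^ 2 - 4)) := by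
  have h_card := card_matrix_trace_det hF t 1
  rw [mul_one] at h_card
  exact (congrArg _ (Nat.card_congr ((Equiv.subtypeSubtypeEquivSubtypeInter
    (fun A : Matrix (Fin 2) (Fin 2) F => A.det = 1) (fun A => A.trace = t)).trans
    (Equiv.subtypeEquivRight fun _ => and_comm)))).trans h_card

theorem card_notMem_center_trace_eq (hF : ringChar F ≠ 2) (t : F) :
    (Nat.card {g : SL(2, F) // g ∉ center SL(2, F) ∧ g.1.trace = t} : ℤ) =
      if t ^ 2 - 4 = 0 then (Fintype.card F : ℤ) ^ 2 - 1
      else Fintype.card F * (Fintype.card F + quadraticChar F (t ^ 2 - 4)) := by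
  have h_split : Nat.card {g : SL(2, F) // g.1.trace = t} =
      Nat.card {g : SL(2, F) // g ∈ center SL(2, F) ∧ g.1.trace = t} +
        Nat.card {g : SL(2, F) // g ∉ center SL(2, F) ∧ g.1.trace = t} := by
    simp only [Nat.card_eq_fintype_card, Fintype.card_subtype, and_comm (b := _ = t),
      ← Finset.filter_filter]
    exact (Finset.card_filter_add_card_filter_not _).symm
  have h_fibre := card_specialLinearGroup_trace_eq hF t
  rw [h_split, Nat.cast_add, card_mem_center_trace_eq hF] at h_fibre
  split_ifs at h_fibre ⊢ with ht
  · rw [ht, quadraticChar_zero] at h_fibre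
    push_cast at h_fibre
    linear_combination h_fibre
  · simpa using h_fibre

omit [DecidableEq F] in
theorem card_specialLinearGroup_two (hF : ringChar F ≠ 2) :
    (Nat.card SL(2, F) : ℤ) = Fintype.card F * (Fintype.card F ^ 2 - 1) := by
  classical
  have h4 : (4 : F) ≠ 0 := by
    simpa [show (4 : F) = 2 * 2 by norm_num] using Ring.two_ne_zero hF
  rw [Nat.card_congr (Equiv.sigmaFiberEquiv fun g : SL(2, F) => g.1.trace).symm, Nat.card_sigma,
    Nat.cast_sum]
  simp only [card_specialLinearGroup_trace_eq hF, ← Finset.mul_sum, Finset.sum_add_distrib,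
    sum_quadraticChar_sq_sub hF h4, Finset.sum_const, Finset.card_univ, nsmul_eq_mul]
  ring

theorem card_centralizer_of_notMem_center (hF : ringChar F ≠ 2) {g : SL(2, F)}
    (hg : g ∉ center SL(2, F)) :
    (Nat.card (centralizer {g}) : ℤ) =
      if g.1.trace ^ 2 - 4 = 0 then 2 * (Fintype.card F : ℤ)
      else Fintype.card F - quadraticChar F (g.1.trace ^ 2 - 4) := by
  have h_conic := card_binary_quadratic_form_eq hF g.1.trace 1 one_ne_zero
  simp only [one_mul, mul_one, map_one] at h_conic
  rw [← Nat.card_congr (conicEquivCentralizer hg), h_conic]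
  split_ifs <;> ring

theorem sum_card_centralizer_pow_trace_eq (hF : ringChar F ≠ 2) (m : ℕ) (t : F) :
    ∑ g : SL(2, F) with g ∉ center SL(2, F) ∧ g.1.trace = t,
        (Nat.card (centralizer {g}) : ℤ) ^ (m + 1) =
      Nat.card SL(2, F) * if t ^ 2 - 4 = 0 then 2 * (2 * (Fintype.card F : ℤ)) ^ m
        else (Fintype.card F - quadraticChar F (t ^ 2 - 4)) ^ m := by
  have h_const (g : SL(2, F)) (hg : g ∉ center SL(2, F) ∧ g.1.trace = t) :
      (Nat.card (centralizer {g}) : ℤ) = _ := hg.2 ▸ card_centralizer_of_notMem_center hF hg.1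
  rw [Finset.sum_congr rfl fun g hg => by rw [h_const g (Finset.mem_filter_univ g |>.1 hg)],
    Finset.sum_const, ← Fintype.card_subtype, ← Nat.card_eq_fintype_card, nsmul_eq_mul,
    card_notMem_center_trace_eq hF, card_specialLinearGroup_two hF]
  split_ifs with ht
  · ring
  · have hχ : quadraticChar F (t ^ 2 - 4) ^ 2 = 1 := quadraticChar_sq_one ht
    linear_combination (-Fintype.card F * (Fintype.card F - quadraticChar F (t ^ 2 - 4)) ^ m) * hχ

theorem two_mul_sum_card_centralizer_pow (hF : ringChar F ≠ 2) (m : ℕ) :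
    2 * ∑ g : SL(2, F) with g ∉ center SL(2, F), (Nat.card (centralizer {g}) : ℤ) ^ (m + 1) =
      Nat.card SL(2, F) * (8 * (2 * Fintype.card F : ℤ) ^ m +
        (Fintype.card F - 3) * (Fintype.card F - 1) ^ m +
        (Fintype.card F - 1) * (Fintype.card F + 1) ^ m) := by
  have h4 : (4 : F) = 2 ^ 2 := by norm_num
  have h2 : (2 : F) ≠ 0 := Ring.two_ne_zero hF
  have hχ : quadraticChar F 4 = 1 := h4 ▸ quadraticChar_sq_one' h2
  let f (ε : ℤ) : ℤ :=
    if ε = 0 then 2 * (2 * (Fintype.card F : ℤ)) ^ m else (Fintype.card F - ε) ^ m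
  have h_trace (t : F) : ∑ g : SL(2, F) with g ∉ center SL(2, F) ∧ g.1.trace = t,
      (Nat.card (centralizer {g}) : ℤ) ^ (m + 1) =
        Nat.card SL(2, F) * f (quadraticChar F (t ^ 2 - 4)) := by
    simp only [sum_card_centralizer_pow_trace_eq hF, f, quadraticChar_eq_zero_iff]
  have h_sum := two_mul_sum_comp_quadraticChar_sq_sub hF (h4 ▸ pow_ne_zero 2 h2) f
  have hf_zero : f 0 = 2 * (2 * (Fintype.card F : ℤ)) ^ m := if_pos rfl
  have hf_one : f 1 = (Fintype.card F - 1 : ℤ) ^ m := if_neg one_ne_zero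
  have hf_neg_one : f (-1) = (Fintype.card F + 1 : ℤ) ^ m := by
    rw [← sub_neg_eq_add]
    exact if_neg (neg_ne_zero.2 one_ne_zero)
  rw [hχ, hf_zero, hf_one, hf_neg_one] at h_sum
  rw [← Finset.sum_fiberwise _ fun g : SL(2, F) => g.1.trace]
  simp only [Finset.filter_filter, h_trace, ← Finset.mul_sum]
  linear_combination Nat.card SL(2, F) * h_sum

omit [DecidableEq F] in
theorem two_mul_commClassCount_specialLinearGroup_two_succ (hF : ringChar F ≠ 2) (m : ℕ) :
    (2 * commClassCount SL(2, F) (m + 1) : ℤ) =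
      4 * commClassCount SL(2, F) m + 8 * (2 * Fintype.card F : ℤ) ^ m +
        (Fintype.card F - 3) * (Fintype.card F - 1) ^ m +
        (Fintype.card F - 1) * (Fintype.card F + 1) ^ m := by
  classical
  have h_card : (Nat.card SL(2, F) : ℤ) ≠ 0 := Nat.cast_ne_zero.2 Nat.card_pos.ne'
  have h_rec := congrArg (Nat.cast : ℕ → ℤ) (commClassCount_succ_mul_card
    (G := SL(2, F)) (fun _ => isMulCommutative_centralizer_of_notMem_center) m)
  push_cast [card_center_specialLinearGroup_two hF] at h_rec
  refine mul_right_cancel₀ h_card ?_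
  linear_combination 2 * h_rec + two_mul_sum_card_centralizer_pow hF m

end SpecialLinear

/-- For `q` odd, `c_s(2,1,q) = q + 4` and `c_s(2,2,q) = q^2 + 8q + 9`: the number of
simultaneous conjugacy classes of pairs of commuting elements of `SL_2(F_q)`
equals `q^2 + 8q + 9`. -/
theorem stmt_15 (q : ℕ) (hq : IsPrimePow q) (hodd : Odd q)
    (F : Type*) [Field F] [Fintype F] (hF : Fintype.card F = q) :
    commClassCount (Matrix.SpecialLinearGroup (Fin 2) F) 1 = q + 4 ∧
    commClassCount (Matrix.SpecialLinearGroup (Fin 2) F) 2 = q ^ 2 + 8 * q + 9 := by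
  have hchar : ringChar F ≠ 2 := by
    rwa [Ne, FiniteField.even_card_iff_char_two, hF, ← Nat.even_iff, Nat.not_even_iff_odd]
  have h_one := two_mul_commClassCount_specialLinearGroup_two_succ hchar 0
  have h_two := two_mul_commClassCount_specialLinearGroup_two_succ hchar 1
  rw [hF] at h_one h_two
  simp only [commClassCount_zero, zero_add, pow_zero, pow_one,
    Nat.cast_one, one_add_one_eq_two] at h_one h_two
  zify
  constructor
  · linarith
  · linarith
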